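/- Let L be a 2-trivial Lie algebra over a field K of characteristic zero, and suppose L is the semidirect sum L = S ⋉ I of a subalgebra S and an ideal I. Then for every finite-dimensional S-module V, the subspace of S-invariants (H^2(I,K) ⊗ V)^S is zero, where S acts on H^2(I,K) via the action induced by the adjoint action of S on I, and acts on the tensor product diagonally. -/

import Mathlib

universe u v

section TwoCohomology

variable (K : Type u) [Field K]
variable (L : Type v) [LieRing L] [LieAlgebra K L]

/-- `f` is an alternating bilinear 2-cocycle on `L` with values in the `L`-module `V`:
it satisfies `f a a = 0` and the Chevalley–Eilenberg 2-cocycle identity. -/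
def IsLieTwoCocycle {V : Type*} [AddCommGroup V] [Module K V] [LieRingModule L V]
    (f : L →ₗ[K] L →ₗ[K] V) : Prop :=
  (∀ a : L, f a a = 0) ∧
    ∀ x y z : L,
      ⁅x, f y z⁆ - ⁅y, f x z⁆ + ⁅z, f x y⁆ - f ⁅x, y⁆ z + f ⁅x, z⁆ y - f ⁅y, z⁆ x = 0

/-- `f` is a 2-coboundary: `f (x, y) = x · g y − y · g x − g ⁅x, y⁆` for some linear `g`. -/
def IsLieTwoCoboundary {V : Type*} [AddCommGroup V] [Module K V] [LieRingModule L V]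
    (f : L →ₗ[K] L →ₗ[K] V) : Prop :=
  ∃ g : L →ₗ[K] V, ∀ x y : L, f x y = ⁅x, g y⁆ - ⁅y, g x⁆ - g ⁅x, y⁆

/-- A finite-dimensional Lie algebra `L` is 2-trivial if `H²(L,V) = 0`, i.e. every
alternating 2-cocycle is a 2-coboundary, for every finite-dimensional `L`-module `V`. -/
def IsTwoTrivial : Prop :=
  ∀ (V : Type u) [AddCommGroup V] [Module K V] [LieRingModule L V] [LieModule K L V]
    [FiniteDimensional K V] (f : L →ₗ[K] L →ₗ[K] V),
      IsLieTwoCocycle K L f → IsLieTwoCoboundary K L f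

end TwoCohomology

section SecondCohomologyOfIdeal

variable (K : Type u) [Field K]
variable (L : Type v) [LieRing L] [LieAlgebra K L]
variable (I : LieIdeal K L)

/-- The alternating bilinear 2-cocycles on the ideal `I` with values in the trivial
one-dimensional module `K`, as a submodule of the space of all functions `I → I → K`:
bilinear alternating functions `f` satisfying
`f(⁅a,b⁆,c) − f(⁅a,c⁆,b) + f(⁅b,c⁆,a) = 0`. -/
def Z2 : Submodule K (↥I → ↥I → K) where
  carrier := {f |
    (∀ a a' b : ↥I, f (a + a') b = f a b + f a' b) ∧
    (∀ (c : K) (a b : ↥I), f (c • a) b = c • f a b) ∧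
    (∀ a b b' : ↥I, f a (b + b') = f a b + f a b') ∧
    (∀ (c : K) (a b : ↥I), f a (c • b) = c • f a b) ∧
    (∀ a : ↥I, f a a = 0) ∧
    (∀ a b c : ↥I, f ⁅a, b⁆ c - f ⁅a, c⁆ b + f ⁅b, c⁆ a = 0)}
  add_mem' := by
    rintro f g ⟨hf1, hf2, hf3, hf4, hf5, hf6⟩ ⟨hg1, hg2, hg3, hg4, hg5, hg6⟩
    refine ⟨fun a a' b => ?_, fun c a b => ?_, fun a b b' => ?_, fun c a b => ?_,
      fun a => ?_, fun a b c => ?_⟩ <;>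
      simp only [Pi.add_apply, hf1, hf2, hf3, hf4, hf5, hf6, hg1, hg2, hg3, hg4, hg5, hg6,
        smul_eq_mul]
    · ring
    · ring
    · ring
    · ring
    · ring
    · linear_combination hf6 a b c + hg6 a b c
  zero_mem' := by
    refine ⟨fun a a' b => ?_, fun c a b => ?_, fun a b b' => ?_, fun c a b => ?_,
      fun a => ?_, fun a b c => ?_⟩ <;> simp
  smul_mem' := by
    rintro t f ⟨hf1, hf2, hf3, hf4, hf5, hf6⟩
    refine ⟨fun a a' b => ?_, fun c a b => ?_, fun a b b' => ?_, fun c a b => ?_,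
      fun a => ?_, fun a b c => ?_⟩ <;>
      simp only [Pi.smul_apply, hf1, hf2, hf3, hf4, hf5, smul_eq_mul]
    · ring
    · ring
    · ring
    · ring
    · ring
    · linear_combination t * hf6 a b c

/-- The 2-coboundaries on `I` with trivial coefficients: the functions of the form
`(a, b) ↦ g ⁅a, b⁆` for a linear map `g : I → K`. -/
def B2 : Submodule K (↥I → ↥I → K) where
  carrier := {f | ∃ g : ↥I →ₗ[K] K, ∀ a b : ↥I, f a b = g ⁅a, b⁆}
  add_mem' := by
    rintro f f' ⟨g, hg⟩ ⟨g', hg'⟩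
    exact ⟨g + g', fun a b => by simp [hg a b, hg' a b]⟩
  zero_mem' := ⟨0, fun a b => by simp⟩
  smul_mem' := by
    rintro c f ⟨g, hg⟩
    exact ⟨c • g, fun a b => by simp [hg a b]⟩

/-- `H²(I,K)`, the second Chevalley–Eilenberg cohomology of `I` with trivial
coefficients: 2-cocycles modulo 2-coboundaries. -/
abbrev H2 := ↥(Z2 K L I) ⧸ Submodule.comap (Z2 K L I).subtype (B2 K L I)

/-- The adjoint action of `x ∈ L` on the ideal `I`, as a linear endomorphism of `I`. -/
def adI (x : L) : ↥I →ₗ[K] ↥I where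
  toFun a := ⟨⁅x, (a : L)⁆, I.lie_mem a.2⟩
  map_add' a b := Subtype.ext (by simp)
  map_smul' c a := Subtype.ext (by simp)

lemma adI_bracket (x : L) (a b : ↥I) :
    adI K L I x ⁅a, b⁆ = ⁅adI K L I x a, b⁆ + ⁅a, adI K L I x b⁆ := by
  apply Subtype.ext
  simp only [adI, LinearMap.coe_mk, AddHom.coe_mk, AddSubmonoid.coe_add,
    Submodule.coe_toAddSubmonoid, LieIdeal.coe_bracket_of_module]
  exact leibniz_lie x (a : L) (b : L)

/-- The action of `x ∈ L` on 2-cochains of `I` with trivial coefficients: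
`(x·f)(y₁, y₂) = −f(⁅x,y₁⁆, y₂) − f(y₁, ⁅x,y₂⁆)`. -/
def actC2 (x : L) : (↥I → ↥I → K) →ₗ[K] (↥I → ↥I → K) where
  toFun f := fun a b => -f (adI K L I x a) b - f a (adI K L I x b)
  map_add' f g := by
    funext a b
    simp only [Pi.add_apply]
    ring
  map_smul' c f := by
    funext a b
    simp only [Pi.smul_apply, RingHom.id_apply, smul_eq_mul]
    ring

lemma actC2_mem_Z2 (x : L) {f : ↥I → ↥I → K} (hf : f ∈ Z2 K L I) :
    actC2 K L I x f ∈ Z2 K L I := by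
  obtain ⟨h1, h2, h3, h4, h5, h6⟩ := hf
  have hskew : ∀ a b : ↥I, f a b = -f b a := by
    intro a b
    have h := h5 (a + b)
    rw [h1, h3, h3, h5 a, h5 b] at h
    linear_combination h
  have key : ∀ a b : ↥I,
      actC2 K L I x f a b = -f (adI K L I x a) b - f a (adI K L I x b) := fun a b => rfl
  refine ⟨fun a a' b => ?_, fun c a b => ?_, fun a b b' => ?_, fun c a b => ?_,
    fun a => ?_, fun a b c => ?_⟩
  · simp only [key, map_add, h1, h3]; ring
  · simp only [key, map_smul, h2, h4, smul_eq_mul]; ring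
  · simp only [key, map_add, h1, h3]; ring
  · simp only [key, map_smul, h2, h4, smul_eq_mul]; ring
  · simp only [key]
    linear_combination -hskew (adI K L I x a) a
  · simp only [key]
    rw [adI_bracket K L I x a b, adI_bracket K L I x a c, adI_bracket K L I x b c,
      h1, h1, h1]
    linear_combination -h6 (adI K L I x a) b c - h6 a (adI K L I x b) c -
      h6 a b (adI K L I x c)

lemma actC2_mem_B2 (x : L) {f : ↥I → ↥I → K} (hf : f ∈ B2 K L I) :
    actC2 K L I x f ∈ B2 K L I := by
  obtain ⟨g, hg⟩ := hf
  refine ⟨-(g ∘ₗ adI K L I x), fun a b => ?_⟩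
  have key : actC2 K L I x f a b = -f (adI K L I x a) b - f a (adI K L I x b) := rfl
  rw [key, hg (adI K L I x a) b, hg a (adI K L I x b)]
  simp only [LinearMap.neg_apply, LinearMap.comp_apply, adI_bracket K L I x a b, map_add]
  ring

/-- The action of `x` on 2-cocycles. -/
def actZ2 (x : L) : ↥(Z2 K L I) →ₗ[K] ↥(Z2 K L I) :=
  (actC2 K L I x).restrict (fun f hf => actC2_mem_Z2 K L I x hf)

/-- The induced action of `x ∈ L` on `H²(I,K)`, coming from the adjoint action of `x`
on the ideal `I`. -/
def actH2 (x : L) : H2 K L I →ₗ[K] H2 K L I :=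
  Submodule.mapQ (Submodule.comap (Z2 K L I).subtype (B2 K L I))
    (Submodule.comap (Z2 K L I).subtype (B2 K L I)) (actZ2 K L I x)
    (by
      rintro ⟨f, hfZ⟩ hfB
      simpa [actZ2, LinearMap.restrict_apply, Submodule.mem_comap] using
        actC2_mem_B2 K L I x hfB)

end SecondCohomologyOfIdeal

/-!
This is the Hochschild–Serre spectral sequence of `I ⊆ L` made explicit in total degree two.
Since `V` is finite-dimensional, an invariant of `H²(I, K) ⊗ V` is represented by a cocycle
`f : I × I → V` with `s · f` a coboundary for every `s ∈ S`. As `S` is a retract of `L` it is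
2-trivial itself, so the primitives `γ s` of `s · f` can be corrected by elements of
`H¹(I, V) = Z¹(I, V)` to make `γ` a 1-cocycle of `S` with values in `Hom(I, V)` (this kills `d₂ f`).
Then `f(a, b) - γ(s)(b) + γ(t)(a)` is a 2-cocycle on `L` at `(s + a, t + b)`, and a primitive of it
restricts on `I` to a primitive of `f`, up to sign.
-/

open TensorProduct LieModule.Cohomology

section TwoTrivial

variable {K : Type u} [Field K] {L : Type*} [LieRing L] [LieAlgebra K L]

lemma isLieTwoCocycle_d₁₂ {M : Type*} [AddCommGroup M] [Module K M] [LieRingModule L M]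
    [LieModule K L M] (g : L →ₗ[K] M) :
    IsLieTwoCocycle K L (d₁₂ K L M g : L →ₗ[K] L →ₗ[K] M) :=
  ⟨(d₁₂ K L M g).2, fun x y z =>
    congr($(LinearMap.congr_fun (d₂₃_comp_d₁₂ K L M) g) x y z)⟩

lemma IsLieTwoCocycle.compl₁₂_lieHom {S M : Type*} [LieRing S] [LieAlgebra K S] [AddCommGroup M]
    [Module K M] [LieRingModule S M] [LieRingModule L M] {f : S →ₗ[K] S →ₗ[K] M}
    (hf : IsLieTwoCocycle K S f) (p : L →ₗ⁅K⁆ S) (hp : ∀ (x : L) (m : M), ⁅x, m⁆ = ⁅p x, m⁆) :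
    IsLieTwoCocycle K L (f.compl₁₂ (p : L →ₗ[K] S) (p : L →ₗ[K] S)) :=
  ⟨fun x => hf.1 (p x), fun x y z => by simpa [hp] using hf.2 (p x) (p y) (p z)⟩

namespace IsTwoTrivial

attribute [local instance] LieRing.ofAssociativeRing in
lemma isLieTwoCoboundary {M : Type*} [AddCommGroup M] [Module K M]
    [LieRingModule L M] [LieModule K L M] [FiniteDimensional K M] (hL : IsTwoTrivial K L)
    {f : L →ₗ[K] L →ₗ[K] M} (hf : IsLieTwoCocycle K L f) : IsLieTwoCoboundary K L f := by
  let e : M ≃ₗ[K] (Fin (Module.finrank K M) → K) := (Module.finBasis K M).equivFun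
  let ρ : L →ₗ⁅K⁆ Module.End K (Fin (Module.finrank K M) → K) :=
    e.lieConj.toLieHom.comp (LieModule.toEnd K L M)
  let _ := LieRingModule.compLieHom (Fin (Module.finrank K M) → K) ρ
  let _ := LieModule.compLieHom (Fin (Module.finrank K M) → K) ρ
  have lie_e (x : L) (m : M) : ⁅x, e m⁆ = e ⁅x, m⁆ :=
    congr(e ⁅x, $(e.symm_apply_apply m)⁆)
  have hef : IsLieTwoCocycle K L (f.compr₂ e.toLinearMap) :=
    ⟨fun x => by simp [hf.1], fun x y z => by simpa [lie_e] using congr(e $(hf.2 x y z))⟩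
  obtain ⟨g, hg⟩ := hL _ _ hef
  refine ⟨e.symm.toLinearMap ∘ₗ g, fun x y => e.injective ?_⟩
  simpa [← lie_e] using hg x y

lemma of_leftInverse {S : Type*} [LieRing S] [LieAlgebra K S]
    (hL : IsTwoTrivial K L) (p : L →ₗ⁅K⁆ S) (i : S →ₗ⁅K⁆ L) (hpi : Function.LeftInverse p i) :
    IsTwoTrivial K S := by
  intro M _ _ _ _ _ f hf
  let _ := LieRingModule.compLieHom M p
  let _ := LieModule.compLieHom M p
  have lie_eq (x : L) (m : M) : ⁅x, m⁆ = ⁅p x, m⁆ := rfl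
  obtain ⟨g, hg⟩ := hL.isLieTwoCoboundary (hf.compl₁₂_lieHom p lie_eq)
  refine ⟨g ∘ₗ (i : S →ₗ[K] L), fun s t => ?_⟩
  simpa [lie_eq, hpi s, hpi t] using hg (i s) (i t)

theorem exists_d₁₂_eq_zero_and_comp_eq {M N : Type*} [AddCommGroup M] [Module K M]
    [LieRingModule L M] [LieModule K L M] [AddCommGroup N] [Module K N] [LieRingModule L N]
    [LieModule K L N] (hL : IsTwoTrivial K L) (D : M →ₗ⁅K,L⁆ N) [FiniteDimensional K D.ker]
    {φ : L →ₗ[K] N} (hφ : d₁₂ K L N φ = 0) (hφD : ∀ x, φ x ∈ D.range) :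
    ∃ γ : L →ₗ[K] M, d₁₂ K L M γ = 0 ∧ (D : M →ₗ[K] N) ∘ₗ γ = φ := by
  obtain ⟨γ₀, hγ₀⟩ : ∃ γ₀ : L →ₗ[K] M, (D : M →ₗ[K] N) ∘ₗ γ₀ = φ := by
    obtain ⟨γ₀, hγ₀⟩ := Module.projective_lifting_property (D : M →ₗ[K] N).rangeRestrict
      (φ.codRestrict _ fun x => (D.mem_range _).1 (hφD x)) (LinearMap.surjective_rangeRestrict _)
    exact ⟨γ₀, LinearMap.ext fun x => congr(($hγ₀ x : N))⟩
  have hDγ₀ (x : L) : D (γ₀ x) = φ x := LinearMap.congr_fun hγ₀ x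
  have d₁₂_mem_ker (x y : L) : d₁₂ K L M γ₀ x y ∈ D.ker := by
    have hφxy : d₁₂ K L N φ x y = 0 := congr($hφ x y)
    simpa [hDγ₀] using hφxy
  let f : L →ₗ[K] L →ₗ[K] D.ker := LinearMap.mk₂ K (fun x y => ⟨d₁₂ K L M γ₀ x y, d₁₂_mem_ker x y⟩)
    (fun _ _ _ => Subtype.ext (LinearMap.map_add₂ (d₁₂ K L M γ₀).1 _ _ _))
    (fun _ _ _ => Subtype.ext (LinearMap.map_smul₂ (d₁₂ K L M γ₀).1 _ _ _))
    (fun _ _ _ => Subtype.ext (map_add (d₁₂ K L M γ₀ _) _ _))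
    (fun _ _ _ => Subtype.ext (map_smul (d₁₂ K L M γ₀ _) _ _))
  have hf : IsLieTwoCocycle K L f :=
    ⟨fun x => Subtype.ext ((isLieTwoCocycle_d₁₂ γ₀).1 x),
      fun x y z => Subtype.ext ((isLieTwoCocycle_d₁₂ γ₀).2 x y z)⟩
  obtain ⟨κ, hκ⟩ := hL.isLieTwoCoboundary hf
  let κ' : L →ₗ[K] M := (D.ker.incl : D.ker →ₗ[K] M) ∘ₗ κ
  have hDκ' : (D : M →ₗ[K] N) ∘ₗ κ' = 0 := LinearMap.ext fun x => (κ x).2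
  have d₁₂_κ' : d₁₂ K L M κ' = d₁₂ K L M γ₀ := by
    ext x y
    exact congr(($(hκ x y) : M)).symm
  exact ⟨γ₀ - κ', by rw [map_sub, d₁₂_κ', sub_self],
    by rw [LinearMap.comp_sub, hDκ', hγ₀, sub_zero]⟩

theorem exists_d₁₂_eq_zero_and_apply_eq_lie {M N : Type*} [AddCommGroup M] [Module K M]
    [LieRingModule L M] [LieModule K L M] [AddCommGroup N] [Module K N] [LieRingModule L N]
    [LieModule K L N] (hL : IsTwoTrivial K L) (D : M →ₗ⁅K,L⁆ N) [FiniteDimensional K D.ker]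
    {n : N} (hn : ∀ x : L, ⁅x, n⁆ ∈ D.range) :
    ∃ γ : L →ₗ[K] M, d₁₂ K L M γ = 0 ∧ ∀ x, D (γ x) = ⁅x, n⁆ := by
  let φ : L →ₗ[K] N := LinearMap.flip (LieModule.toEnd K L N : L →ₗ[K] Module.End K N) n
  have hφ : d₁₂ K L N φ = 0 := by
    ext x y
    exact sub_eq_zero.2 (lie_lie x y n).symm
  obtain ⟨γ, hγ, hDγ⟩ := hL.exists_d₁₂_eq_zero_and_comp_eq D hφ hn
  exact ⟨γ, hγ, LinearMap.congr_fun hDγ⟩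

end IsTwoTrivial

end TwoTrivial

section TrivialCoefficients

variable (R A V : Type*) [CommRing R] [LieRing A] [LieAlgebra R A] [AddCommGroup V] [Module R V]

/-- The alternating bilinear 2-cocycles on `A` with values in `V`, on which `A` acts trivially. -/
def trivialTwoCocycles : Submodule R (A →ₗ[R] A →ₗ[R] V) where
  carrier := {f | (∀ a, f a a = 0) ∧ ∀ a b c, f ⁅a, b⁆ c - f ⁅a, c⁆ b + f ⁅b, c⁆ a = 0}
  add_mem' := by
    rintro f g ⟨hf_alt, hf⟩ ⟨hg_alt, hg⟩
    refine ⟨fun a => by simp [hf_alt, hg_alt], fun a b c => ?_⟩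
    simp only [LinearMap.add_apply]
    linear_combination (norm := module) hf a b c + hg a b c
  zero_mem' := by simp
  smul_mem' t f := by
    rintro ⟨hf_alt, hf⟩
    exact ⟨fun a => by simp [hf_alt], fun a b c => by
      simp [← smul_sub, ← smul_add, hf]⟩

variable (S : Type*) [LieRing S] [LieAlgebra R S] [LieRingModule S A] [LieModule R S A]
  [IsLieTower S A A] [LieRingModule S V] [LieModule R S V]

/-- The map `g ↦ ((a, b) ↦ g ⁅a, b⁆)`, whose range is the space of 2-coboundaries on `A` with values
in the trivial `A`-module `V`. The sign is the opposite of the usual differential, as in `B2`.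
It is equivariant for any Lie algebra `S` that acts on `A` by derivations. -/
def trivialCoboundary : (A →ₗ[R] V) →ₗ⁅R,S⁆ (A →ₗ[R] A →ₗ[R] V) where
  toFun g := LinearMap.compr₂ (LieModule.toEnd R A A : A →ₗ[R] A →ₗ[R] A) g
  map_add' g g' := by ext; simp
  map_smul' t g := by ext; simp
  map_lie' {s g} := by
    ext a b
    simp [LieHom.lie_apply, leibniz_lie s a b, sub_sub, add_comm]

variable {R A V} in
@[simp]
lemma trivialCoboundary_apply_apply (g : A →ₗ[R] V) (a b : A) :
    trivialCoboundary R A V S g a b = g ⁅a, b⁆ := rfl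

variable {R A V S} in
lemma mem_range_trivialCoboundary_iff {f : A →ₗ[R] A →ₗ[R] V} :
    f ∈ (trivialCoboundary R A V S).range ↔ ∃ g : A →ₗ[R] V, ∀ a b, f a b = g ⁅a, b⁆ := by
  simp only [LieModuleHom.mem_range, LinearMap.ext_iff, trivialCoboundary_apply_apply, eq_comm]

variable {R A V S} in
lemma mem_range_trivialCoboundary_iff_repr {ι : Type*} [Finite ι] (b : Module.Basis ι R V)
    {f : A →ₗ[R] A →ₗ[R] V} :
    f ∈ (trivialCoboundary R A V S).range ↔
      ∀ i, ∃ g : A →ₗ[R] R, ∀ a a', b.repr (f a a') i = g ⁅a, a'⁆ := by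
  rw [mem_range_trivialCoboundary_iff]
  constructor
  · rintro ⟨g, hg⟩ i
    exact ⟨b.coord i ∘ₗ g, fun a a' => by simp [hg]⟩
  · intro h
    have := Fintype.ofFinite ι
    choose g hg using h
    refine ⟨∑ i, (g i).smulRight (b i), fun a a' => ?_⟩
    simp [← hg, b.sum_repr]

/-- The homomorphism from `S` to the derivations of `A` given by an action of `S` on `A` that
satisfies the Leibniz rule. -/
def lieDerivationOfIsLieTower : S →ₗ⁅R⁆ LieDerivation R A A where
  toFun s :=
    { toLinearMap := LieModule.toEnd R S A s
      leibniz' := fun a b => by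
        simp only [LieModule.toEnd_apply_apply]
        rw [leibniz_lie, ← lie_skew b, sub_neg_eq_add, add_comm] }
  map_add' s t := by ext; simp
  map_smul' c s := by ext; simp
  map_lie' {s t} := by ext; simp

@[simp]
lemma lieDerivationOfIsLieTower_apply (s : S) (a : A) :
    lieDerivationOfIsLieTower R A S s a = ⁅s, a⁆ := rfl

end TrivialCoefficients

section SemiDirectSum

variable {R A V S : Type*} [CommRing R] [LieRing A] [LieAlgebra R A] [AddCommGroup V] [Module R V]
  [LieRing S] [LieAlgebra R S] [LieRingModule S A] [LieModule R S A]
  [IsLieTower S A A]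

/-- The extension `(a + s, b + t) ↦ f(a, b) - γ(s)(b) + γ(t)(a)` of `f` from `A` to the semidirect
sum of `A` and `S`. -/
def semiDirectExtend (f : A →ₗ[R] A →ₗ[R] V) (γ : S →ₗ[R] A →ₗ[R] V) :
    (A ⋊⁅lieDerivationOfIsLieTower R A S⁆ S) →ₗ[R]
      (A ⋊⁅lieDerivationOfIsLieTower R A S⁆ S) →ₗ[R] V :=
  LinearMap.mk₂ R (fun x y => f x.left y.left - γ x.right y.left + γ y.right x.left)
    (fun _ _ _ => by
      simp only [LieAlgebra.SemiDirectSum.add_eq_mk, map_add, LinearMap.add_apply]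
      abel)
    (fun _ _ _ => by simp [smul_add, smul_sub])
    (fun _ _ _ => by
      simp only [LieAlgebra.SemiDirectSum.add_eq_mk, map_add, LinearMap.add_apply]
      abel)
    (fun _ _ _ => by simp [smul_add, smul_sub])

lemma semiDirectExtend_apply_apply (f : A →ₗ[R] A →ₗ[R] V) (γ : S →ₗ[R] A →ₗ[R] V)
    (x y : A ⋊⁅lieDerivationOfIsLieTower R A S⁆ S) :
    semiDirectExtend f γ x y = f x.left y.left - γ x.right y.left + γ y.right x.left := rfl

end SemiDirectSum

section InvariantClasses

variable {K : Type u} [Field K] {A S V : Type*} [LieRing A] [LieAlgebra K A]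
  [LieRing S] [LieAlgebra K S] [LieRingModule S A] [LieModule K S A] [IsLieTower S A A]
  [AddCommGroup V] [Module K V] [LieRingModule S V] [LieModule K S V]

lemma isLieTwoCocycle_semiDirectExtend
    [LieRingModule (A ⋊⁅lieDerivationOfIsLieTower K A S⁆ S) V]
    (lie_eq : ∀ (x : A ⋊⁅lieDerivationOfIsLieTower K A S⁆ S) (v : V), ⁅x, v⁆ = ⁅x.right, v⁆)
    {f : A →ₗ[K] A →ₗ[K] V} (hf : f ∈ trivialTwoCocycles K A V)
    {γ : S →ₗ[K] A →ₗ[K] V} (hγ : d₁₂ K S (A →ₗ[K] V) γ = 0)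
    (hfγ : ∀ s, trivialCoboundary K A V S (γ s) = ⁅s, f⁆) :
    IsLieTwoCocycle K (A ⋊⁅lieDerivationOfIsLieTower K A S⁆ S) (semiDirectExtend f γ) := by
  obtain ⟨hf_alt, hf_cocycle⟩ := hf
  have hf_skew (a b : A) : f a b = -f b a := (LinearMap.IsAlt.neg hf_alt b a).symm
  have lie_f (s : S) (a b : A) : γ s ⁅a, b⁆ = ⁅s, f a b⁆ - f a ⁅s, b⁆ - f ⁅s, a⁆ b := by
    simpa [LieHom.lie_apply] using congr($(hfγ s) a b)
  have lie_γ (s t : S) (a : A) :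
      ⁅s, γ t a⁆ - γ t ⁅s, a⁆ - (⁅t, γ s a⁆ - γ s ⁅t, a⁆) - γ ⁅s, t⁆ a = 0 := by
    have hγst : d₁₂ K S (A →ₗ[K] V) γ s t a = 0 := congr($hγ s t a)
    simpa [LieHom.lie_apply] using hγst
  refine ⟨fun x => by simp [semiDirectExtend_apply_apply, hf_alt], ?_⟩
  rintro ⟨a, s⟩ ⟨b, t⟩ ⟨c, r⟩
  simp only [semiDirectExtend_apply_apply, lie_eq, LieAlgebra.SemiDirectSum.lie_eq_mk,
    lieDerivationOfIsLieTower_apply, map_add, map_sub, LinearMap.add_apply, LinearMap.sub_apply,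
    lie_add, lie_sub]
  rw [hf_skew ⁅s, c⁆ b, hf_skew ⁅t, c⁆ a, hf_skew ⁅r, b⁆ a]
  linear_combination (norm := module) -lie_f s b c + lie_f t a c - lie_f r a b
    - hf_cocycle a b c - lie_γ s t c + lie_γ s r b - lie_γ t r a

theorem mem_range_trivialCoboundary_of_isTwoTrivial [FiniteDimensional K A] [FiniteDimensional K V]
    (h : IsTwoTrivial K (A ⋊⁅lieDerivationOfIsLieTower K A S⁆ S))
    {f : A →ₗ[K] A →ₗ[K] V} (hf : f ∈ trivialTwoCocycles K A V)
    (hSf : ∀ s : S, ⁅s, f⁆ ∈ (trivialCoboundary K A V S).range) :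
    f ∈ (trivialCoboundary K A V S).range := by
  have hS : IsTwoTrivial K S := h.of_leftInverse (LieAlgebra.SemiDirectSum.projr _)
    (LieAlgebra.SemiDirectSum.inr _) fun _ => LieAlgebra.SemiDirectSum.projr_inr_apply _
  have : FiniteDimensional K (trivialCoboundary K A V S).ker :=
    FiniteDimensional.finiteDimensional_submodule
      (trivialCoboundary K A V S).ker.toSubmodule
  obtain ⟨γ, hγ, hfγ⟩ := hS.exists_d₁₂_eq_zero_and_apply_eq_lie (trivialCoboundary K A V S) hSf
  let _ := LieRingModule.compLieHom V
    (LieAlgebra.SemiDirectSum.projr (lieDerivationOfIsLieTower K A S))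
  let _ := LieModule.compLieHom V
    (LieAlgebra.SemiDirectSum.projr (lieDerivationOfIsLieTower K A S))
  have lie_eq (x : A ⋊⁅lieDerivationOfIsLieTower K A S⁆ S) (v : V) : ⁅x, v⁆ = ⁅x.right, v⁆ := rfl
  obtain ⟨g, hg⟩ := h.isLieTwoCoboundary
    (isLieTwoCocycle_semiDirectExtend lie_eq hf hγ hfγ)
  let inl : A →ₗ⁅K⁆ A ⋊⁅lieDerivationOfIsLieTower K A S⁆ S := LieAlgebra.SemiDirectSum.inl _
  refine mem_range_trivialCoboundary_iff.2 ⟨-(g ∘ₗ (inl : A →ₗ[K] _)), fun a b => ?_⟩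
  simpa [semiDirectExtend_apply_apply, lie_eq, inl] using hg (inl a) (inl b)

end InvariantClasses

section Complement

variable {R L : Type*} [CommRing R] [LieRing L] [LieAlgebra R L]
  (S : LieSubalgebra R L) (I : LieIdeal R L)

instance instIsLieTowerLieSubalgebraLieIdeal : IsLieTower S I I where
  leibniz_lie s a b := leibniz_lie (s : L) a b

variable {S I} in
/-- The decomposition of a Lie algebra as the semidirect sum of an ideal and a complementary
subalgebra. -/
noncomputable def semiDirectSumEquivOfIsCompl (h : IsCompl S.toSubmodule I.toSubmodule) :
    (I ⋊⁅lieDerivationOfIsLieTower R I S⁆ S) ≃ₗ⁅R⁆ L where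
  __ := LieAlgebra.SemiDirectSum.toProdl _ ≪≫ₗ
    Submodule.prodEquivOfIsCompl I.toSubmodule S.toSubmodule h.symm
  map_lie' {x y} := by
    change ((⁅x.left, y.left⁆ + ⁅x.right, y.left⁆ - ⁅y.right, x.left⁆ : I) : L) +
      (⁅x.right, y.right⁆ : S) = ⁅(x.left + x.right : L), (y.left + y.right : L)⁆
    simp only [LieIdeal.coe_bracket_of_module, LieSubalgebra.coe_bracket_of_module,
      AddSubgroupClass.coe_sub, LieSubmodule.coe_add, LieSubmodule.coe_bracket,
      LieSubalgebra.coe_bracket, lie_add, add_lie]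
    rw [← lie_skew (y.right : L)]
    abel

end Complement

section TensorProduct

lemma equivFinsuppOfBasisRight_rTensor {R M N V ι : Type*} [CommRing R] [AddCommGroup M]
    [Module R M] [AddCommGroup N] [Module R N] [AddCommGroup V] [Module R V] [DecidableEq ι]
    (b : Module.Basis ι R V) (φ : M →ₗ[R] N) (ξ : M ⊗[R] V) (i : ι) :
    equivFinsuppOfBasisRight b (φ.rTensor V ξ) i = φ (equivFinsuppOfBasisRight b ξ i) := by
  induction ξ with
  | zero => simp
  | tmul m v => simp
  | add ξ η hξ hη => simp only [map_add, Finsupp.add_apply, hξ, hη]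

variable {K : Type u} [Field K] {L : Type v} [LieRing L] [LieAlgebra K L] (I : LieIdeal K L)

/-- A cocycle in `Z2 K L I`, which is encoded as a bare function, as a bilinear map. -/
def Z2.toBilin : Z2 K L I →ₗ[K] I →ₗ[K] I →ₗ[K] K where
  toFun z := LinearMap.mk₂ K z.1 z.2.1 z.2.2.1 z.2.2.2.1 z.2.2.2.2.1
  map_add' _ _ := rfl
  map_smul' _ _ := rfl

variable (V : Type*) [AddCommGroup V] [Module K V]

/-- The map `Z²(I, K) ⊗ V → Z²(I, V)` sending `z ⊗ v` to `(a, b) ↦ z(a, b) • v`. -/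
def Z2.tensorToBilin : Z2 K L I ⊗[K] V →ₗ[K] I →ₗ[K] I →ₗ[K] V :=
  TensorProduct.lift <| LinearMap.mk₂ K
    (fun z v => (Z2.toBilin I z).compr₂ (LinearMap.toSpanSingleton K V v))
    (fun _ _ _ => by ext; simp [add_smul]) (fun _ _ _ => by ext; simp [mul_smul])
    (fun _ _ _ => by ext; simp) (fun _ _ _ => by ext; exact smul_comm ..)

variable {I V}

@[simp]
lemma Z2.tensorToBilin_tmul (z : Z2 K L I) (v : V) (a b : I) :
    Z2.tensorToBilin I V (z ⊗ₜ v) a b = z.1 a b • v := rfl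

lemma Z2.tensorToBilin_mem_trivialTwoCocycles (ξ : Z2 K L I ⊗[K] V) :
    Z2.tensorToBilin I V ξ ∈ trivialTwoCocycles K I V := by
  induction ξ with
  | zero => simp
  | tmul z v =>
    obtain ⟨-, -, -, -, hz_alt, hz_cocycle⟩ := z.2
    exact ⟨fun a => by simp [hz_alt], fun a b c => by
      simp only [Z2.tensorToBilin_tmul, ← sub_smul, ← add_smul, hz_cocycle, zero_smul]⟩
  | add ξ η hξ hη => rw [map_add]; exact add_mem hξ hη

lemma Z2.repr_tensorToBilin {ι : Type*} [DecidableEq ι] (b : Module.Basis ι K V)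
    (ξ : Z2 K L I ⊗[K] V) (a a' : I) (i : ι) :
    b.repr (Z2.tensorToBilin I V ξ a a') i = (equivFinsuppOfBasisRight b ξ i).1 a a' := by
  induction ξ with
  | zero => simp
  | tmul z v => simp [mul_comm]
  | add ξ η hξ hη => simp [hξ, hη]

variable {S : LieSubalgebra K L} [LieRingModule S V] [LieModule K S V]

theorem Z2.rTensor_mkQ_eq_zero_iff [FiniteDimensional K V] (ξ : Z2 K L I ⊗[K] V) :
    (Submodule.mkQ ((B2 K L I).comap (Z2 K L I).subtype)).rTensor V ξ = 0 ↔
      Z2.tensorToBilin I V ξ ∈ (trivialCoboundary K I V S).range := by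
  classical
  let b := Module.finBasis K V
  rw [mem_range_trivialCoboundary_iff_repr b, ← (equivFinsuppOfBasisRight b).map_eq_zero_iff,
    DFunLike.ext_iff]
  refine forall_congr' fun i => ?_
  rw [equivFinsuppOfBasisRight_rTensor, Finsupp.zero_apply, Submodule.mkQ_apply,
    Submodule.Quotient.mk_eq_zero]
  simp only [Z2.repr_tensorToBilin]
  rfl

lemma Z2.lie_tensorToBilin (s : S) (ξ : Z2 K L I ⊗[K] V) :
    ⁅s, Z2.tensorToBilin I V ξ⁆ =
      Z2.tensorToBilin I V ((actZ2 K L I s).rTensor V ξ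
        + (LieModule.toEnd K S V s).lTensor (Z2 K L I) ξ) := by
  induction ξ with
  | zero => simp
  | tmul z v =>
    ext a b
    have actZ2_apply : (actZ2 K L I s z).1 a b = -z.1 ⁅s, a⁆ b - z.1 a ⁅s, b⁆ := rfl
    simp only [LieHom.lie_apply, LinearMap.sub_apply, Z2.tensorToBilin_tmul, LinearMap.add_apply,
      LinearMap.rTensor_tmul, LinearMap.lTensor_tmul, LieModule.toEnd_apply_apply, map_add,
      actZ2_apply, lie_smul]
    module
  | add ξ η hξ hη =>
    simp only [map_add, lie_add, hξ, hη]
    abel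

lemma Z2.rTensor_mkQ_actZ2_add_toEnd (s : S) (ξ : Z2 K L I ⊗[K] V) :
    (Submodule.mkQ ((B2 K L I).comap (Z2 K L I).subtype)).rTensor V
        ((actZ2 K L I s).rTensor V ξ + (LieModule.toEnd K S V s).lTensor (Z2 K L I) ξ) =
      ((actH2 K L I s).rTensor V + (LieModule.toEnd K S V s).lTensor (H2 K L I))
        ((Submodule.mkQ ((B2 K L I).comap (Z2 K L I).subtype)).rTensor V ξ) := by
  induction ξ with
  | zero => simp
  | tmul z v => simp [actH2]
  | add ξ η hξ hη =>
    simp only [map_add] at hξ hη ⊢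
    rw [← hξ, ← hη]
    abel

end TensorProduct

theorem invariants_H2_tensor_eq_bot_general
    {K : Type u} {L : Type*} [Field K] [LieRing L] [LieAlgebra K L]
    {S : LieSubalgebra K L} {I : LieIdeal K L} [FiniteDimensional K I]
    (hcompl : IsCompl S.toSubmodule I.toSubmodule) (h2 : IsTwoTrivial K L)
    (V : Type*) [AddCommGroup V] [Module K V] [LieRingModule S V] [LieModule K S V]
    [FiniteDimensional K V] :
    (⨅ s : S, LinearMap.ker
        (TensorProduct.map (actH2 K L I (s : L)) LinearMap.id
          + TensorProduct.map LinearMap.id (LieModule.toEnd K S V s))) = ⊥ := by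
  let e := semiDirectSumEquivOfIsCompl hcompl
  have h2_sum : IsTwoTrivial K (I ⋊⁅lieDerivationOfIsLieTower K I S⁆ S) :=
    h2.of_leftInverse e.symm.toLieHom e.toLieHom e.symm_apply_apply
  refine (Submodule.eq_bot_iff _).2 fun x hx => ?_
  obtain ⟨ξ, rfl⟩ := LinearMap.rTensor_surjective V (Submodule.mkQ_surjective _) x
  rw [Z2.rTensor_mkQ_eq_zero_iff (S := S)]
  refine mem_range_trivialCoboundary_of_isTwoTrivial h2_sum
    (Z2.tensorToBilin_mem_trivialTwoCocycles ξ) fun s => ?_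
  rw [Z2.lie_tensorToBilin, ← Z2.rTensor_mkQ_eq_zero_iff (S := S), Z2.rTensor_mkQ_actZ2_add_toEnd]
  exact (Submodule.mem_iInf _).1 hx s

/-- Let `L` be a 2-trivial Lie algebra over a field `K` of characteristic zero which is
the semidirect sum `L = S ⋉ I` of a subalgebra `S` and an ideal `I` (`L = S ⊕ I` as
vector spaces).  Then for every finite-dimensional `S`-module `V`, the subspace of
`S`-invariants `(H²(I,K) ⊗ V)^S` is zero; here `S` acts on `H²(I,K)` via the action
induced by the adjoint action of `S` on `I`, and acts on the tensor product diagonally. -/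
theorem invariants_H2_tensor_eq_bot
    (K : Type u) (L : Type v) [Field K] [CharZero K]
    [LieRing L] [LieAlgebra K L] [FiniteDimensional K L]
    (S : LieSubalgebra K L) (I : LieIdeal K L)
    (hcompl : IsCompl S.toSubmodule I.toSubmodule)
    (h2 : IsTwoTrivial K L)
    (V : Type u) [AddCommGroup V] [Module K V] [LieRingModule ↥S V] [LieModule K ↥S V]
    [FiniteDimensional K V] :
    (⨅ s : ↥S, LinearMap.ker
        (TensorProduct.map (actH2 K L I (s : L)) LinearMap.id
          + TensorProduct.map LinearMap.id (LieModule.toEnd K ↥S V s))) = ⊥ :=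
  invariants_H2_tensor_eq_bot_general hcompl h2 V
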